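/- Each Riesz transform R_j (suitably defined on L^∞ by subtracting K(-y)χ_{|y|≥1}(y) in the kernel) is a bounded linear operator from L^∞(ℝ^n) to BMO(ℝ^n): there is a constant C(n) with ‖R_j(φ)‖_* ≤ C(n)‖φ‖_∞ for all φ ∈ L^∞(ℝ^n). -/

import Mathlib

open MeasureTheory Real Set Filter

/-- Open axis-parallel cube with corner `c` and side length `l`. -/
def cube {n : ℕ} (c : EuclideanSpace ℝ (Fin n)) (l : ℝ) : Set (EuclideanSpace ℝ (Fin n)) :=
  {x | ∀ i, x i ∈ Set.Ioo (c i) (c i + l)}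

/-- Mean of `f` over the cube with corner `c` and side length `l`. -/
noncomputable def cubeAvg {n : ℕ} (f : EuclideanSpace ℝ (Fin n) → ℝ)
    (c : EuclideanSpace ℝ (Fin n)) (l : ℝ) : ℝ :=
  (∫ x in cube c l, f x) / l ^ n

/-- Mean oscillation of `f` over the cube with corner `c` and side length `l`. -/
noncomputable def cubeOsc {n : ℕ} (f : EuclideanSpace ℝ (Fin n) → ℝ)
    (c : EuclideanSpace ℝ (Fin n)) (l : ℝ) : ℝ :=
  (∫ x in cube c l, |f x - cubeAvg f c l|) / l ^ n

/-- `f ∈ BMO(ℝⁿ)`. -/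
def IsBMO {n : ℕ} (f : EuclideanSpace ℝ (Fin n) → ℝ) : Prop :=
  LocallyIntegrable f ∧ ∃ C, ∀ c l, 0 < l → cubeOsc f c l ≤ C

/-- `f ∈ VMO(ℝⁿ)`. -/
def IsVMO {n : ℕ} (f : EuclideanSpace ℝ (Fin n) → ℝ) : Prop :=
  IsBMO f ∧ ∀ ε > (0 : ℝ), ∃ δ > (0 : ℝ), ∀ c l, 0 < l → l ≤ δ → cubeOsc f c l ≤ ε

/-- The `BMO` seminorm `‖f‖_*`. -/
noncomputable def bmoNorm {n : ℕ} (f : EuclideanSpace ℝ (Fin n) → ℝ) : ℝ :=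
  sInf {C : ℝ | 0 ≤ C ∧ ∀ c l, 0 < l → cubeOsc f c l ≤ C}

/-- Riesz kernel `K_j(x) = c_n x_j / |x|^{n+1}` with `c_n = Γ((n+1)/2)/π^((n+1)/2)`. -/
noncomputable def rieszK (n : ℕ) (j : Fin n) (x : EuclideanSpace ℝ (Fin n)) : ℝ :=
  (Real.Gamma (((n : ℝ) + 1) / 2) / Real.pi ^ (((n : ℝ) + 1) / 2)) * x j / ‖x‖ ^ (n + 1)

/-- `ε`-truncation of the Riesz transform of `φ ∈ L²`:
`∫_{|x-y| ≥ ε} K_j(x-y) φ(y) dy`. -/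
noncomputable def rieszTruncL2 {n : ℕ} (j : Fin n) (φ : EuclideanSpace ℝ (Fin n) → ℝ)
    (x : EuclideanSpace ℝ (Fin n)) (ε : ℝ) : ℝ :=
  ∫ y in {y : EuclideanSpace ℝ (Fin n) | ε ≤ dist x y}, rieszK n j (x - y) * φ y

/-- `ε`-truncation of the Riesz transform extended to `L^∞`:
`∫_{|x-y| ≥ ε} (K_j(x-y) - K_j(-y) χ_{|y| ≥ 1}(y)) φ(y) dy`. -/
noncomputable def rieszTruncLinf {n : ℕ} (j : Fin n) (φ : EuclideanSpace ℝ (Fin n) → ℝ)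
    (x : EuclideanSpace ℝ (Fin n)) (ε : ℝ) : ℝ :=
  ∫ y in {y : EuclideanSpace ℝ (Fin n) | ε ≤ dist x y},
    (rieszK n j (x - y) - (if 1 ≤ ‖y‖ then rieszK n j (-y) else 0)) * φ y

/-- `g` is the principal-value Riesz transform (extended to `L^∞`) of `φ`, a.e. -/
def IsRieszTransformLinf {n : ℕ} (j : Fin n) (φ g : EuclideanSpace ℝ (Fin n) → ℝ) : Prop :=
  ∀ᵐ x : EuclideanSpace ℝ (Fin n),
    Tendsto (fun ε => rieszTruncLinf j φ x ε) (nhdsWithin 0 (Set.Ioi 0)) (nhds (g x))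


lemma sin_small (t a b : ℝ) (ha : 0 < a) (hab : a ≤ b) :
    |∫ r in a..b, Real.sin (t * r) / r| ≤ |t| * (b - a) := by
  have h := intervalIntegral.norm_integral_le_of_norm_le_const (a := a) (b := b) (C := |t|)
    (f := fun r => Real.sin (t * r) / r) (by
      intro r hr
      rw [uIoc_of_le hab] at hr
      have hr0 : 0 < r := ha.trans hr.1
      rw [Real.norm_eq_abs, abs_div, abs_of_pos hr0, div_le_iff₀ hr0]
      calc |Real.sin (t * r)| ≤ |t * r| := Real.abs_sin_le_abs
        _ = |t| * r := by rw [abs_mul, abs_of_pos hr0])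
  rwa [Real.norm_eq_abs, abs_of_nonneg (sub_nonneg.2 hab)] at h

lemma sin_large (t a b : ℝ) (ht : t ≠ 0) (ha : 0 < a) (hab : a ≤ b) :
    |∫ r in a..b, Real.sin (t * r) / r| ≤ 2 / (|t| * a) := by
  have hb : 0 < b := ha.trans_le hab
  have hpos : ∀ r ∈ uIcc a b, 0 < r := by
    intro r hr
    rw [uIcc_of_le hab] at hr
    exact ha.trans_le hr.1
  have hne : ∀ r ∈ uIcc a b, r ≠ 0 := fun r hr => (hpos r hr).ne'
  have i1 : IntervalIntegrable (fun r => Real.sin (t * r) / r) volume a b := by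
    apply ContinuousOn.intervalIntegrable
    exact ContinuousOn.div (by fun_prop) (by fun_prop) hne
  have i2 : IntervalIntegrable (fun r => Real.cos (t * r) / (t * r ^ 2)) volume a b := by
    apply ContinuousOn.intervalIntegrable
    refine ContinuousOn.div (by fun_prop) (by fun_prop) ?_
    intro r hr
    exact mul_ne_zero ht (pow_ne_zero _ (hne r hr))
  have i3 : IntervalIntegrable (fun r : ℝ => 1 / (|t| * r ^ 2)) volume a b := by
    apply ContinuousOn.intervalIntegrable
    refine ContinuousOn.div (by fun_prop) (by fun_prop) ?_
    intro r hr
    exact mul_ne_zero (abs_ne_zero.2 ht) (pow_ne_zero _ (hne r hr))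
  have h1 : ∫ r in a..b, (Real.sin (t * r) / r + Real.cos (t * r) / (t * r ^ 2))
      = -Real.cos (t * b) / (t * b) - -Real.cos (t * a) / (t * a) := by
    apply intervalIntegral.integral_eq_sub_of_hasDerivAt (f := fun r => -Real.cos (t * r) / (t * r))
    · intro r hr
      have hr0 := hne r hr
      have hd : HasDerivAt (fun r : ℝ => t * r) t r := by
        simpa using (hasDerivAt_id r).const_mul t
      have := (hd.cos.neg).div hd (mul_ne_zero ht hr0)
      refine this.congr_deriv ?_
      simp only [Pi.neg_apply]
      field_simp
      ring
    · exact i1.add i2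
  have h2 : ∫ r in a..b, 1 / (|t| * r ^ 2) = -1 / (|t| * b) - -1 / (|t| * a) := by
    apply intervalIntegral.integral_eq_sub_of_hasDerivAt (f := fun r => -1 / (|t| * r))
    · intro r hr
      have hr0 := hne r hr
      have hd : HasDerivAt (fun r : ℝ => |t| * r) |t| r := by
        simpa using (hasDerivAt_id r).const_mul |t|
      have ht' := abs_ne_zero.2 ht
      have := (hasDerivAt_const r (-1:ℝ)).div hd (mul_ne_zero ht' hr0)
      refine this.congr_deriv ?_
      field_simp
      ring
    · exact i3
  rw [intervalIntegral.integral_add i1 i2] at h1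
  have h3 : |∫ r in a..b, Real.cos (t * r) / (t * r ^ 2)| ≤ ∫ r in a..b, 1 / (|t| * r ^ 2) := by
    rw [← Real.norm_eq_abs]
    apply intervalIntegral.norm_integral_le_of_norm_le hab _ i3
    refine ae_of_all _ fun r hr => ?_
    rw [Real.norm_eq_abs, abs_div, abs_mul, abs_of_nonneg (sq_nonneg r)]
    gcongr
    exact Real.abs_cos_le_one _
  have htp := abs_pos.2 ht
  have hcb : |-Real.cos (t * b) / (t * b)| ≤ 1 / (|t| * b) := by
    rw [abs_div, abs_neg, abs_mul, abs_of_pos hb]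
    gcongr
    exact Real.abs_cos_le_one _
  have hca : |-Real.cos (t * a) / (t * a)| ≤ 1 / (|t| * a) := by
    rw [abs_div, abs_neg, abs_mul, abs_of_pos ha]
    gcongr
    exact Real.abs_cos_le_one _
  rw [h2] at h3
  have e : (2:ℝ) / (|t| * a) = 1 / (|t| * a) + 1 / (|t| * a) := by ring
  have e1 : (-1:ℝ) / (|t| * a) = - (1 / (|t| * a)) := by ring
  have e2 : (-1:ℝ) / (|t| * b) = - (1 / (|t| * b)) := by ring
  rw [e]
  rw [e1, e2] at h3
  rw [abs_le] at *
  constructor <;> linarith [h3.1, h3.2, hcb.1, hcb.2, hca.1, hca.2]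

lemma sin_bound (t a b : ℝ) (ha : 0 < a) (hab : a ≤ b) :
    |∫ r in a..b, Real.sin (t * r) / r| ≤ 3 := by
  by_cases ht : t = 0
  · simp [ht]
  have htp := abs_pos.2 ht
  have hd : 0 < 1 / |t| := by positivity
  rcases le_total b (1 / |t|) with h | h
  · refine (sin_small t a b ha hab).trans ?_
    have : |t| * (b - a) ≤ |t| * (1 / |t|) := by gcongr; linarith
    rw [mul_one_div_cancel htp.ne'] at this
    linarith
  rcases le_total (1 / |t|) a with h' | h'
  · refine (sin_large t a b ht ha hab).trans ?_
    have : |t| * (1 / |t|) ≤ |t| * a := by gcongr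
    rw [mul_one_div_cancel htp.ne'] at this
    rw [div_le_iff₀ (by positivity)]
    linarith
  · have i1 : ∀ x y : ℝ, 0 < x → x ≤ y →
        IntervalIntegrable (fun r => Real.sin (t * r) / r) volume x y := by
      intro x y hx hxy
      apply ContinuousOn.intervalIntegrable
      refine ContinuousOn.div (by fun_prop) (by fun_prop) ?_
      intro r hr
      rw [uIcc_of_le hxy] at hr
      exact (hx.trans_le hr.1).ne'
    rw [← intervalIntegral.integral_add_adjacent_intervals (i1 a _ ha h') (i1 _ b hd h)]
    refine (abs_add_le _ _).trans ?_
    have A := sin_small t a _ ha h'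
    have B := sin_large t _ b ht hd h
    have : |t| * (1 / |t| - a) ≤ |t| * (1 / |t|) := by gcongr; linarith
    rw [mul_one_div_cancel htp.ne'] at this B
    linarith

/-- The Riesz normalising constant. -/
noncomputable def rzc (n : ℕ) : ℝ :=
  Real.Gamma (((n : ℝ) + 1) / 2) / Real.pi ^ (((n : ℝ) + 1) / 2)

lemma rzc_pos (n : ℕ) : 0 < rzc n := by
  unfold rzc
  have : 0 < Real.Gamma (((n : ℝ) + 1) / 2) := Real.Gamma_pos_of_pos (by positivity)
  positivity

lemma rieszK_eq (n : ℕ) (j : Fin n) (x : EuclideanSpace ℝ (Fin n)) :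
    rieszK n j x = rzc n * x j / ‖x‖ ^ (n + 1) := rfl

lemma measurable_rieszK (n : ℕ) (j : Fin n) : Measurable (rieszK n j) := by
  have : rieszK n j = fun x => rzc n * x j / ‖x‖ ^ (n + 1) := rfl
  rw [this]
  fun_prop

lemma rieszK_neg (n : ℕ) (j : Fin n) (x : EuclideanSpace ℝ (Fin n)) :
    rieszK n j (-x) = - rieszK n j x := by
  simp only [rieszK_eq, norm_neg, PiLp.neg_apply]
  ring

lemma coord_le {n : ℕ} (j : Fin n) (x : EuclideanSpace ℝ (Fin n)) : |x j| ≤ ‖x‖ := by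
  simpa using PiLp.norm_apply_le x j

lemma rieszK_abs_le (n : ℕ) (j : Fin n) (x : EuclideanSpace ℝ (Fin n)) (s : ℝ) (hs : 0 < s)
    (hx : s ≤ ‖x‖) : |rieszK n j x| ≤ rzc n / s ^ n := by
  have hc := rzc_pos n
  have hx0 : 0 < ‖x‖ := hs.trans_le hx
  rw [rieszK_eq, abs_div, abs_mul, abs_of_pos hc, abs_of_pos (pow_pos hx0 _)]
  calc rzc n * |x j| / ‖x‖ ^ (n + 1) ≤ rzc n * ‖x‖ / ‖x‖ ^ (n + 1) := by
        gcongr; exact coord_le j x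
    _ = rzc n / ‖x‖ ^ n := by
        rw [pow_succ]; field_simp
    _ ≤ rzc n / s ^ n := by gcongr

lemma rieszK_diff (n : ℕ) (j : Fin n) (u v : EuclideanSpace ℝ (Fin n)) (hu : 0 < ‖u‖)
    (huv : ‖u - v‖ ≤ ‖u‖ / 2) :
    |rieszK n j u - rieszK n j v| ≤
      rzc n * (1 + (n + 1) * 4 ^ n) * (‖u - v‖ / ‖u‖ ^ (n + 1)) := by
  have hc := rzc_pos n
  have hv1 : ‖u‖ / 2 ≤ ‖v‖ := by
    have := norm_sub_norm_le u v
    linarith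
  have hv2 : ‖v‖ ≤ 2 * ‖u‖ := by
    have := norm_sub_norm_le v u
    rw [norm_sub_rev] at this
    linarith
  have hv0 : 0 < ‖v‖ := by linarith
  have e : rieszK n j u - rieszK n j v = rzc n * ((u j - v j) / ‖u‖ ^ (n + 1)
      + v j * ((‖v‖ ^ (n + 1) - ‖u‖ ^ (n + 1)) / (‖u‖ ^ (n + 1) * ‖v‖ ^ (n + 1)))) := by
    rw [rieszK_eq, rieszK_eq]
    field_simp
    ring
  have h1 : |u j - v j| ≤ ‖u - v‖ := by simpa using coord_le j (u - v)
  have h2 : |‖v‖ ^ (n + 1) - ‖u‖ ^ (n + 1)| ≤ ‖u - v‖ * (n + 1) * (2 * ‖u‖) ^ n := by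
    refine (abs_pow_sub_pow_le _ _ _).trans ?_
    have a1 : |‖v‖ - ‖u‖| ≤ ‖u - v‖ := by
      rw [norm_sub_rev]; exact abs_norm_sub_norm_le v u
    have a2 : max |‖v‖| |‖u‖| ≤ 2 * ‖u‖ := by
      rw [abs_of_pos hu, abs_of_pos hv0]
      exact max_le hv2 (by linarith)
    push_cast
    gcongr
  rw [e, abs_mul, abs_of_pos hc, mul_assoc]
  gcongr
  refine (abs_add_le _ _).trans ?_
  rw [add_mul, one_mul]
  apply add_le_add
  · rw [abs_div, abs_of_pos (pow_pos hu _)]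
    gcongr
  · rw [abs_mul, abs_div, abs_of_pos (mul_pos (pow_pos hu (n+1)) (pow_pos hv0 (n+1)))]
    calc |v j| * (|‖v‖ ^ (n + 1) - ‖u‖ ^ (n + 1)| / (‖u‖ ^ (n + 1) * ‖v‖ ^ (n + 1)))
        ≤ ‖v‖ * ((‖u - v‖ * (n + 1) * (2 * ‖u‖) ^ n) / (‖u‖ ^ (n + 1) * ‖v‖ ^ (n + 1))) := by
          gcongr
          exact coord_le j v
      _ = (‖u - v‖ * (n + 1) * (2 * ‖u‖) ^ n) / (‖u‖ ^ (n + 1)) * (1 / ‖v‖ ^ n) := by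
          rw [pow_succ ‖v‖ n]
          field_simp
      _ ≤ (‖u - v‖ * (n + 1) * (2 * ‖u‖) ^ n) / (‖u‖ ^ (n + 1)) * (1 / (‖u‖ / 2) ^ n) := by
          gcongr
      _ = (n + 1) * 4 ^ n * (‖u - v‖ / ‖u‖ ^ (n + 1)) := by
          rw [div_pow, mul_pow, show (4:ℝ) = 2 * 2 by norm_num, mul_pow]
          field_simp

/-- Tail integrability, with value. -/
lemma tail_int (n : ℕ) (hn : 0 < n) (z : EuclideanSpace ℝ (Fin n)) (ρ : ℝ) (hρ : 0 < ρ) :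
    IntegrableOn (fun y => 1 / ‖z - y‖ ^ (n + 1)) {y | ρ ≤ ‖z - y‖} ∧
    ∫ y in {y | ρ ≤ ‖z - y‖}, 1 / ‖z - y‖ ^ (n + 1) =
      n * (volume : Measure (EuclideanSpace ℝ (Fin n))).real (Metric.ball 0 1) * (1 / ρ) := by
  have : Nonempty (Fin n) := ⟨⟨0, hn⟩⟩
  have hms : MeasurableSet {y : EuclideanSpace ℝ (Fin n) | ρ ≤ ‖z - y‖} :=
    measurableSet_le (by fun_prop) (by fun_prop)
  set F : ℝ → ℝ := (Ici ρ).indicator (fun r => 1 / r ^ (n + 1)) with hF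
  have hind : ∀ y : EuclideanSpace ℝ (Fin n),
      ({y | ρ ≤ ‖z - y‖}.indicator (fun y => 1 / ‖z - y‖ ^ (n + 1))) y = F ‖z - y‖ := by
    intro y
    simp [hF, indicator]
  have hpow : ∀ r ∈ Ioi (0:ℝ), r ^ (n - 1) • F r = (Ici ρ).indicator (fun r => r ^ (-2 : ℝ)) r := by
    intro r hr
    have hr0 : r ≠ 0 := ne_of_gt hr
    by_cases h : r ∈ Ici ρ
    · simp only [hF, indicator_of_mem h, smul_eq_mul]
      rw [Real.rpow_neg (le_of_lt hr), show (2:ℝ) = ((2:ℕ):ℝ) by norm_num, Real.rpow_natCast]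
      obtain ⟨m, rfl⟩ : ∃ m, n = m + 1 := ⟨n - 1, by omega⟩
      simp only [Nat.add_sub_cancel]
      field_simp
      ring
    · simp [hF, indicator_of_notMem h]
  have hsub : Ioi (0:ℝ) ∩ Ici ρ = Ici ρ := by
    apply inter_eq_right.2
    intro r hr
    exact lt_of_lt_of_le hρ hr
  have hFint : Integrable (fun x : EuclideanSpace ℝ (Fin n) => F ‖x‖) := by
    rw [integrable_fun_norm_addHaar]
    simp only [finrank_euclideanSpace, Fintype.card_fin]
    rw [integrableOn_congr_fun hpow measurableSet_Ioi]
    unfold IntegrableOn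
    rw [integrable_indicator_iff measurableSet_Ici]
    unfold IntegrableOn
    rw [Measure.restrict_restrict measurableSet_Ici, inter_comm, hsub]
    exact (integrableOn_Ici_iff_integrableOn_Ioi).2 (integrableOn_Ioi_rpow_of_lt (by norm_num) hρ)
  have hval : ∫ x : EuclideanSpace ℝ (Fin n), F ‖x‖ = 
      n * (volume : Measure (EuclideanSpace ℝ (Fin n))).real (Metric.ball 0 1) * (1 / ρ) := by
    rw [integral_fun_norm_addHaar]
    simp only [finrank_euclideanSpace, Fintype.card_fin]
    rw [setIntegral_congr_fun measurableSet_Ioi hpow, setIntegral_indicator measurableSet_Ici, hsub,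
      integral_Ici_eq_integral_Ioi, integral_Ioi_rpow_of_lt (by norm_num) hρ]
    have : ρ ^ (-2 + 1 : ℝ) = ρ⁻¹ := by
      norm_num [Real.rpow_neg_one]
    rw [this]
    simp
    ring
  constructor
  · rw [← integrable_indicator_iff hms]
    simp only [funext hind]
    exact hFint.comp_sub_left z
  · rw [← integral_indicator hms]
    simp only [hind]
    rw [integral_sub_left_eq_self (fun x => F ‖x‖) volume z, hval]

/-- Doubly truncated kernel. -/
noncomputable def kN (n : ℕ) (j : Fin n) (ε N : ℝ) : EuclideanSpace ℝ (Fin n) → ℝ :=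
  {z | ε ≤ ‖z‖ ∧ ‖z‖ < N}.indicator (rieszK n j)

lemma measurableSet_ann (n : ℕ) (ε N : ℝ) :
    MeasurableSet {z : EuclideanSpace ℝ (Fin n) | ε ≤ ‖z‖ ∧ ‖z‖ < N} := by
  have h1 : MeasurableSet {z : EuclideanSpace ℝ (Fin n) | ε ≤ ‖z‖} :=
    measurableSet_le (by fun_prop) (by fun_prop)
  have h2 : MeasurableSet {z : EuclideanSpace ℝ (Fin n) | ‖z‖ < N} :=
    measurableSet_lt (by fun_prop) (by fun_prop)
  exact h1.inter h2

lemma measurable_kN (n : ℕ) (j : Fin n) (ε N : ℝ) : Measurable (kN n j ε N) :=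
  (measurable_rieszK n j).indicator (measurableSet_ann n ε N)

lemma kN_abs_le (n : ℕ) (j : Fin n) (ε N : ℝ) (hε : 0 < ε) (z : EuclideanSpace ℝ (Fin n)) :
    |kN n j ε N z| ≤ rzc n / ε ^ n := by
  have := rzc_pos n
  unfold kN
  by_cases h : z ∈ {z : EuclideanSpace ℝ (Fin n) | ε ≤ ‖z‖ ∧ ‖z‖ < N}
  · rw [indicator_of_mem h]
    exact rieszK_abs_le n j z ε hε h.1
  · rw [indicator_of_notMem h, abs_zero]
    positivity

lemma integrable_kN (n : ℕ) (j : Fin n) (ε N : ℝ) (hε : 0 < ε) : Integrable (kN n j ε N) := by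
  unfold kN
  rw [integrable_indicator_iff (measurableSet_ann n ε N)]
  apply Measure.integrableOn_of_bounded (M := rzc n / ε ^ n)
  · apply ne_of_lt
    refine lt_of_le_of_lt (measure_mono (t := Metric.ball 0 N) ?_) measure_ball_lt_top
    intro z hz
    simpa using hz.2
  · exact (measurable_rieszK n j).aestronglyMeasurable
  · filter_upwards [ae_restrict_mem (measurableSet_ann n ε N)] with z hz
    exact rieszK_abs_le n j z ε hε hz.1

lemma kN_neg (n : ℕ) (j : Fin n) (ε N : ℝ) (z : EuclideanSpace ℝ (Fin n)) :
    kN n j ε N (-z) = - kN n j ε N z := by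
  unfold kN
  simp [indicator, rieszK_neg]
  split_ifs <;> simp

lemma polar_bound (n : ℕ) (hn : 0 < n) (f : EuclideanSpace ℝ (Fin n) → ℝ) (hf : Integrable f)
    (A : ℝ) (hA : ∀ θ : EuclideanSpace ℝ (Fin n), ‖θ‖ = 1 →
      |∫ r in Ioi (0:ℝ), r ^ (n - 1) * f (r • θ)| ≤ A) :
    |∫ x, f x| ≤ A * (volume : Measure (EuclideanSpace ℝ (Fin n))).toSphere.real univ := by
  have : Nonempty (Fin n) := ⟨⟨0, hn⟩⟩
  set μ := (volume : Measure (EuclideanSpace ℝ (Fin n)))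
  have mp := μ.measurePreserving_homeomorphUnitSphereProd
  have me := (homeomorphUnitSphereProd (EuclideanSpace ℝ (Fin n))).measurableEmbedding
  set g : Metric.sphere (0 : EuclideanSpace ℝ (Fin n)) 1 × Ioi (0:ℝ) → ℝ :=
    fun p => f (p.2.1 • p.1.1) with hg
  have hgx : ∀ x : ({0}ᶜ : Set (EuclideanSpace ℝ (Fin n))),
      g (homeomorphUnitSphereProd _ x) = f x.1 := by
    intro x
    have : x.1 ≠ 0 := x.2
    have h0 : ‖x.1‖ ≠ 0 := norm_ne_zero_iff.2 this
    simp [hg, smul_smul, h0]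
  have e1 : ∫ x, f x ∂μ = ∫ x : ({0}ᶜ : Set (EuclideanSpace ℝ (Fin n))), f x.1 ∂(μ.comap (↑)) := by
    rw [integral_subtype_comap (measurableSet_singleton _).compl f, restrict_compl_singleton]
  have e2 : ∫ x : ({0}ᶜ : Set (EuclideanSpace ℝ (Fin n))), f x.1 ∂(μ.comap (↑))
      = ∫ p, g p ∂(μ.toSphere.prod (.volumeIoiPow (Module.finrank ℝ (EuclideanSpace ℝ (Fin n)) - 1))) := by
    rw [← mp.integral_comp me g]
    simp only [hgx]
  have hgi : Integrable g (μ.toSphere.prod (.volumeIoiPow (Module.finrank ℝ (EuclideanSpace ℝ (Fin n)) - 1))) := by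
    rw [← mp.integrable_comp_emb me]
    have : g ∘ homeomorphUnitSphereProd (EuclideanSpace ℝ (Fin n)) = f ∘ Subtype.val := by
      funext x
      exact hgx x
    rw [this, ← integrableOn_iff_comap_subtypeVal (measurableSet_singleton _).compl]
    exact hf.integrableOn
  rw [e1, e2, integral_prod _ hgi, ← Real.norm_eq_abs]
  apply norm_integral_le_of_norm_le_const
  refine ae_of_all _ fun θ => ?_
  have hθ : ‖θ.1‖ = 1 := by simp
  refine le_trans (le_of_eq ?_) (hA θ.1 hθ)
  rw [Real.norm_eq_abs]
  congr 1
  simp only [Measure.volumeIoiPow, ENNReal.ofReal]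
  rw [integral_withDensity_eq_integral_smul (by fun_prop)]
  simp only [hg, finrank_euclideanSpace, Fintype.card_fin]
  rw [integral_subtype_comap measurableSet_Ioi
    fun a : ℝ => Real.toNNReal (a ^ (n - 1)) • f (a • θ.1)]
  refine setIntegral_congr_fun measurableSet_Ioi fun r hr => ?_
  rw [NNReal.smul_def, Real.coe_toNNReal _ (pow_nonneg hr.out.le _), smul_eq_mul]

lemma sin_mult (n : ℕ) (hn : 0 < n) (j : Fin n) (ε N : ℝ) (hε : 0 < ε) (hN : ε ≤ N)
    (ξ : EuclideanSpace ℝ (Fin n)) :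
    |∫ z, kN n j ε N z * Real.sin (inner ℝ z ξ)| ≤
      (3 * rzc n) * (volume : Measure (EuclideanSpace ℝ (Fin n))).toSphere.real univ := by
  have hc := rzc_pos n
  apply polar_bound n hn
  · refine (integrable_kN n j ε N hε).mul_bdd (c := 1) ?_ ?_
    · exact Continuous.aestronglyMeasurable (by fun_prop)
    · exact ae_of_all _ fun z => Real.abs_sin_le_one _
  intro θ hθ
  have hpt : ∀ r ∈ Ioi (0:ℝ), r ^ (n - 1) * (kN n j ε N (r • θ) * Real.sin (inner ℝ (r • θ) ξ)) =
      (Ico ε N).indicator (fun r => (rzc n * θ j) * (Real.sin (inner ℝ θ ξ * r) / r)) r := by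
    intro r hr
    have hr0 : 0 < r := hr
    have hnorm : ‖r • θ‖ = r := by rw [norm_smul, hθ, mul_one, Real.norm_eq_abs, abs_of_pos hr0]
    by_cases h : r ∈ Ico ε N
    · rw [indicator_of_mem h]
      unfold kN
      rw [indicator_of_mem (by simpa [hnorm] using h), rieszK_eq, hnorm, real_inner_smul_left,
        mul_comm (inner ℝ θ ξ) r]
      simp only [PiLp.smul_apply, smul_eq_mul]
      obtain ⟨m, rfl⟩ : ∃ m, n = m + 1 := ⟨n - 1, by omega⟩
      simp only [Nat.add_sub_cancel]
      field_simp
      ring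
    · rw [indicator_of_notMem h]
      unfold kN
      rw [indicator_of_notMem (by simpa [hnorm] using h)]
      simp
  rw [setIntegral_congr_fun measurableSet_Ioi hpt, setIntegral_indicator measurableSet_Ico]
  have hsub : Ioi (0:ℝ) ∩ Ico ε N = Ico ε N := by
    apply inter_eq_right.2
    intro r hr
    exact lt_of_lt_of_le hε hr.1
  rw [hsub, integral_const_mul, integral_Ico_eq_integral_Ioc, ← intervalIntegral.integral_of_le hN,
    abs_mul, abs_mul, abs_of_pos hc]
  have h1 : |θ j| ≤ 1 := hθ ▸ coord_le j θ
  have h3 := sin_bound (inner ℝ θ ξ) ε N hε hN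
  calc rzc n * |θ j| * |∫ r in ε..N, Real.sin (inner ℝ θ ξ * r) / r| ≤ rzc n * 1 * 3 := by
        gcongr
    _ = 3 * rzc n := by ring

/-- The multiplier bound. -/
noncomputable def Mc (n : ℕ) : ℝ :=
  (3 * rzc n) * (volume : Measure (EuclideanSpace ℝ (Fin n))).toSphere.real univ

lemma Mc_nonneg (n : ℕ) : 0 ≤ Mc n := by
  have := rzc_pos n
  unfold Mc
  positivity

lemma cos_mult (n : ℕ) (j : Fin n) (ε N : ℝ) (ξ : EuclideanSpace ℝ (Fin n)) :
    ∫ z, kN n j ε N z * Real.cos (inner ℝ z ξ) = 0 := by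
  have h := integral_neg_eq_self (fun z => kN n j ε N z * Real.cos (inner ℝ z ξ)) volume
  simp only [kN_neg, inner_neg_left, Real.cos_neg, neg_mul, integral_neg] at h
  linarith

lemma mult_bound (n : ℕ) (hn : 0 < n) (j : Fin n) (ε N : ℝ) (hε : 0 < ε) (hN : ε ≤ N)
    (ξ : EuclideanSpace ℝ (Fin n)) :
    ‖∫ z, (kN n j ε N z : ℂ) * Complex.exp (((-2 * π * inner ℝ z ξ : ℝ) : ℂ) * Complex.I)‖
      ≤ Mc n := by
  have e : ∀ z, (kN n j ε N z : ℂ) * Complex.exp (((-2 * π * inner ℝ z ξ : ℝ) : ℂ) * Complex.I)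
      = ((kN n j ε N z * Real.cos (inner ℝ z ((-2 * π) • ξ)) : ℝ) : ℂ)
        + ((kN n j ε N z * Real.sin (inner ℝ z ((-2 * π) • ξ)) : ℝ) : ℂ) * Complex.I := by
    intro z
    rw [real_inner_smul_right, Complex.exp_mul_I]
    push_cast
    ring
  simp only [e]
  have i1 : Integrable (fun z => kN n j ε N z * Real.cos (inner ℝ z ((-2 * π) • ξ))) := by
    refine (integrable_kN n j ε N hε).mul_bdd (c := 1) ?_ ?_
    · exact Continuous.aestronglyMeasurable (by fun_prop)
    · exact ae_of_all _ fun z => Real.abs_cos_le_one _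
  have i2 : Integrable (fun z => kN n j ε N z * Real.sin (inner ℝ z ((-2 * π) • ξ))) := by
    refine (integrable_kN n j ε N hε).mul_bdd (c := 1) ?_ ?_
    · exact Continuous.aestronglyMeasurable (by fun_prop)
    · exact ae_of_all _ fun z => Real.abs_sin_le_one _
  rw [integral_add i1.ofReal (i2.ofReal.mul_const _), integral_mul_const, integral_complex_ofReal,
    integral_complex_ofReal, cos_mult]
  simp only [Complex.ofReal_zero, zero_add, norm_mul, Complex.norm_I, mul_one, Complex.norm_real]
  exact sin_mult n hn j ε N hε hN _

section Plancherel

open scoped FourierTransform ENNReal SchwartzMap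

/-- The phase factor as a function. -/
noncomputable def ph {n : ℕ} (z ξ : EuclideanSpace ℝ (Fin n)) : ℂ :=
  Complex.exp (((-2 * π * inner ℝ z ξ : ℝ) : ℂ) * Complex.I)

lemma ph_norm {n : ℕ} (z ξ : EuclideanSpace ℝ (Fin n)) : ‖ph z ξ‖ = 1 := by
  unfold ph
  rw [Complex.norm_exp_ofReal_mul_I]

lemma ph_cont {n : ℕ} :
    Continuous (fun p : EuclideanSpace ℝ (Fin n) × EuclideanSpace ℝ (Fin n) => ph p.1 p.2) := by
  unfold ph
  fun_prop

lemma ph_cont_right {n : ℕ} (z : EuclideanSpace ℝ (Fin n)) : Continuous (ph z) := by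
  unfold ph
  fun_prop

lemma ph_memLp {n : ℕ} (z : EuclideanSpace ℝ (Fin n)) : MemLp (ph z) ∞ volume :=
  memLp_top_of_bound (ph_cont_right z).aestronglyMeasurable 1 (ae_of_all _ fun ξ => (ph_norm z ξ).le)

/-- Translation on `L²`. -/
noncomputable def trL {n : ℕ} (z : EuclideanSpace ℝ (Fin n)) :
    Lp ℂ 2 (volume : Measure (EuclideanSpace ℝ (Fin n))) →
      Lp ℂ 2 (volume : Measure (EuclideanSpace ℝ (Fin n))) :=
  Lp.compMeasurePreserving (fun x => x - z) (measurePreserving_sub_right volume z)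

lemma fourier_schwartz_translate {n : ℕ} (z : EuclideanSpace ℝ (Fin n))
    (f : 𝓢(EuclideanSpace ℝ (Fin n), ℂ)) (ξ : EuclideanSpace ℝ (Fin n)) :
    𝓕 (f.compSubConstCLM ℂ z) ξ = ph z ξ * 𝓕 f ξ := by
  rw [SchwartzMap.fourier_coe, SchwartzMap.fourier_coe, Real.fourier_eq', Real.fourier_eq',
    ← integral_const_mul]
  simp only [SchwartzMap.compSubConstCLM_apply]
  rw [← integral_add_right_eq_self _ z]
  congr 1
  funext v
  simp only [add_sub_cancel_right, smul_eq_mul, ← mul_assoc]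
  unfold ph
  rw [← Complex.exp_add]
  congr 2
  rw [inner_add_left]
  push_cast
  ring

lemma fourier_translate {n : ℕ} (z : EuclideanSpace ℝ (Fin n))
    (f : Lp ℂ 2 (volume : Measure (EuclideanSpace ℝ (Fin n)))) :
    𝓕 (trL z f) = (ContinuousLinearMap.mul ℂ ℂ).holderL volume ∞ 2 2 ((ph_memLp z).toLp) (𝓕 f) := by
  refine (SchwartzMap.denseRange_toLpCLM (F := ℂ) (p := 2) ENNReal.ofNat_ne_top).induction_on
    (p := fun f => 𝓕 (trL z f) =
      (ContinuousLinearMap.mul ℂ ℂ).holderL volume ∞ 2 2 ((ph_memLp z).toLp) (𝓕 f)) f ?_ ?_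
  · apply isClosed_eq
    · have h1 : Continuous (fun f : Lp ℂ 2 (volume : Measure (EuclideanSpace ℝ (Fin n))) => 𝓕 f) :=
        (Lp.fourierTransformₗᵢ _ _).continuous
      exact h1.comp (Lp.isometry_compMeasurePreserving _).continuous
    · have h1 : Continuous (fun f : Lp ℂ 2 (volume : Measure (EuclideanSpace ℝ (Fin n))) => 𝓕 f) :=
        (Lp.fourierTransformₗᵢ _ _).continuous
      exact (ContinuousLinearMap.continuous _).comp h1
  · intro g
    rw [SchwartzMap.toLpCLM_apply]
    have e1 : trL z (g.toLp 2) = (g.compSubConstCLM ℂ z).toLp 2 := rfl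
    rw [e1, SchwartzMap.toLp_fourier_eq, SchwartzMap.toLp_fourier_eq]
    apply Lp.ext
    rw [ContinuousLinearMap.holderL_apply_apply]
    filter_upwards [(ContinuousLinearMap.mul ℂ ℂ).coeFn_holder (r := 2) ((ph_memLp z).toLp)
      ((𝓕 g).toLp 2 (volume : Measure (EuclideanSpace ℝ (Fin n)))),
      (ph_memLp z).coeFn_toLp, (𝓕 g).coeFn_toLp 2 volume,
      (𝓕 (g.compSubConstCLM ℂ z)).coeFn_toLp 2 volume] with ξ h1 h2 h3 h4
    rw [h4, h1, h2, h3, fourier_schwartz_translate]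
    rfl

lemma inner_translate {n : ℕ} (z : EuclideanSpace ℝ (Fin n))
    (f h : Lp ℂ 2 (volume : Measure (EuclideanSpace ℝ (Fin n)))) :
    inner ℂ h (trL z f) = ∫ ξ, ph z ξ * (inner ℂ ((𝓕 h : Lp ℂ 2 _) ξ) ((𝓕 f : Lp ℂ 2 _) ξ)) := by
  rw [← Lp.inner_fourier_eq, fourier_translate, L2.inner_def]
  apply integral_congr_ae
  rw [ContinuousLinearMap.holderL_apply_apply]
  filter_upwards [(ContinuousLinearMap.mul ℂ ℂ).coeFn_holder (r := 2) ((ph_memLp z).toLp) (𝓕 f),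
      (ph_memLp z).coeFn_toLp] with ξ h1 h2
  rw [h1, h2, ← inner_smul_right]
  rfl

lemma bilin_bound_C {n : ℕ} (k : EuclideanSpace ℝ (Fin n) → ℝ) (hk : Integrable k) (M : ℝ)
    (hM : ∀ ξ, ‖∫ z, (k z : ℂ) * ph z ξ‖ ≤ M)
    (f h : Lp ℂ 2 (volume : Measure (EuclideanSpace ℝ (Fin n)))) :
    ‖∫ z, (k z : ℂ) * inner ℂ h (trL z f)‖ ≤ M * (‖h‖ * ‖f‖) := by
  set F : EuclideanSpace ℝ (Fin n) → ℂ :=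
    fun ξ => inner ℂ ((𝓕 h : Lp ℂ 2 _) ξ) ((𝓕 f : Lp ℂ 2 _) ξ) with hF
  have hFi : Integrable F := L2.integrable_inner (𝕜 := ℂ) (𝓕 h : Lp ℂ 2 _) (𝓕 f : Lp ℂ 2 _)
  have hM0 : 0 ≤ M := (norm_nonneg _).trans (hM 0)
  have hprod : Integrable (fun p : EuclideanSpace ℝ (Fin n) × EuclideanSpace ℝ (Fin n) =>
      ((k p.1 : ℂ) * F p.2) * ph p.1 p.2) (volume.prod volume) := by
    refine (hk.ofReal.mul_prod hFi).mul_bdd (c := 1) ph_cont.aestronglyMeasurable ?_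
    exact ae_of_all _ fun p => (ph_norm _ _).le
  have e : ∫ z, (k z : ℂ) * inner ℂ h (trL z f) = ∫ ξ, (∫ z, (k z : ℂ) * ph z ξ) * F ξ := by
    calc ∫ z, (k z : ℂ) * inner ℂ h (trL z f) = ∫ z, ∫ ξ, ((k z : ℂ) * F ξ) * ph z ξ := by
          congr 1
          funext z
          rw [inner_translate, ← integral_const_mul]
          congr 1
          funext ξ
          simp only [hF]
          ring
      _ = ∫ ξ, ∫ z, ((k z : ℂ) * F ξ) * ph z ξ := integral_integral_swap hprod
      _ = _ := by
          congr 1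
          funext ξ
          rw [← integral_mul_const]
          congr 1
          funext z
          ring
  rw [e]
  calc ‖∫ ξ, (∫ z, (k z : ℂ) * ph z ξ) * F ξ‖ ≤ ∫ ξ, M * ‖F ξ‖ := by
        apply norm_integral_le_of_norm_le (hFi.norm.const_mul M)
        refine ae_of_all _ fun ξ => ?_
        rw [norm_mul]
        gcongr
        exact hM ξ
    _ = M * ∫ ξ, ‖F ξ‖ := integral_const_mul _ _
    _ ≤ M * (‖h‖ * ‖f‖) := by
        gcongr
        rw [← Lp.norm_fourier_eq h, ← Lp.norm_fourier_eq f]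
        set a : Lp ℂ 2 (volume : Measure (EuclideanSpace ℝ (Fin n))) := 𝓕 h
        set b : Lp ℂ 2 (volume : Measure (EuclideanSpace ℝ (Fin n))) := 𝓕 f
        have h1 := (ContinuousLinearMap.mul ℂ ℂ).norm_holder_apply_apply_le (r := 1) a b
        rw [L1.norm_eq_integral_norm] at h1
        have h2 : ∫ ξ, ‖F ξ‖ = ∫ ξ, ‖(ContinuousLinearMap.mul ℂ ℂ).holder 1 a b ξ‖ := by
          apply integral_congr_ae
          filter_upwards [(ContinuousLinearMap.mul ℂ ℂ).coeFn_holder (r := 1) a b] with ξ h3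
          rw [h3]
          simp [hF, mul_comm]
        rw [h2]
        refine h1.trans ?_
        have h4 := ContinuousLinearMap.opNorm_mul_le ℂ ℂ
        rw [mul_assoc]
        nlinarith [mul_nonneg (norm_nonneg a) (norm_nonneg b)]

lemma bilin_bound {n : ℕ} (k : EuclideanSpace ℝ (Fin n) → ℝ) (hk : Integrable k) (M : ℝ)
    (hM : ∀ ξ, ‖∫ z, (k z : ℂ) * ph z ξ‖ ≤ M)
    (f h : EuclideanSpace ℝ (Fin n) → ℝ) (hf : MemLp f 2 volume) (hh : MemLp h 2 volume) :
    |∫ z, k z * ∫ x, h x * f (x - z)| ≤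
      M * ((eLpNorm h 2 volume).toReal * (eLpNorm f 2 volume).toReal) := by
  have hfc : MemLp (fun x => (f x : ℂ)) 2 volume := hf.ofReal
  have hhc : MemLp (fun x => (h x : ℂ)) 2 volume := hh.ofReal
  have key := bilin_bound_C k hk M hM hfc.toLp hhc.toLp
  have n1 : ‖hfc.toLp‖ = (eLpNorm f 2 volume).toReal := by
    rw [Lp.norm_toLp]
    congr 1
    apply eLpNorm_congr_norm_ae
    exact ae_of_all _ fun x => by simp
  have n2 : ‖hhc.toLp‖ = (eLpNorm h 2 volume).toReal := by
    rw [Lp.norm_toLp]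
    congr 1
    apply eLpNorm_congr_norm_ae
    exact ae_of_all _ fun x => by simp
  rw [n1, n2] at key
  have e : ∀ z, (k z : ℂ) * inner ℂ hhc.toLp (trL z hfc.toLp)
      = ((k z * ∫ x, h x * f (x - z) : ℝ) : ℂ) := by
    intro z
    push_cast
    congr 1
    rw [← integral_complex_ofReal, L2.inner_def]
    apply integral_congr_ae
    have e1 : trL z hfc.toLp =
      (hfc.comp_measurePreserving (measurePreserving_sub_right volume z)).toLp _ := rfl
    rw [e1]
    filter_upwards [hhc.coeFn_toLp, (hfc.comp_measurePreserving
      (measurePreserving_sub_right volume z)).coeFn_toLp] with x h1 h2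
    rw [h1, h2]
    simp [mul_comm]
  simp only [e] at key
  rwa [integral_complex_ofReal, Complex.norm_real, Real.norm_eq_abs] at key

end Plancherel

lemma L2_of_indicator {n : ℕ} (g : EuclideanSpace ℝ (Fin n) → ℝ) (hg : Measurable g)
    (s : Set (EuclideanSpace ℝ (Fin n))) (hs : MeasurableSet s) (hfin : volume s ≠ ⊤) (b : ℝ)
    (hb : 0 ≤ b) (hgb : ∀ x, |g x| ≤ s.indicator (fun _ => b) x) :
    MemLp g 2 volume ∧ (eLpNorm g 2 volume).toReal ≤ b * √((volume : Measure _).real s) := by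
  have h1 : MemLp (s.indicator (fun _ => b)) 2 (volume : Measure (EuclideanSpace ℝ (Fin n))) :=
    memLp_indicator_const 2 hs b (Or.inr hfin)
  have hle : ∀ x, ‖g x‖ ≤ ‖s.indicator (fun _ => b) x‖ := fun x =>
    (hgb x).trans (le_abs_self _)
  refine ⟨h1.mono hg.aestronglyMeasurable (ae_of_all _ hle), ?_⟩
  have h2 : eLpNorm g 2 volume ≤ eLpNorm (s.indicator (fun _ => b)) 2 volume :=
    eLpNorm_mono hle
  refine (ENNReal.toReal_mono h1.eLpNorm_ne_top h2).trans (le_of_eq ?_)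
  rw [eLpNorm_indicator_const hs (by norm_num) (by norm_num), ENNReal.toReal_mul,
    ← ENNReal.toReal_rpow, Real.sqrt_eq_rpow]
  simp [abs_of_nonneg hb, Measure.real]

lemma U_bound (n : ℕ) (hn : 0 < n) (j : Fin n) (ε N : ℝ) (hε : 0 < ε) (hN : ε ≤ N)
    (f : EuclideanSpace ℝ (Fin n) → ℝ) (hf : Measurable f)
    (s Q : Set (EuclideanSpace ℝ (Fin n))) (hs : MeasurableSet s) (hfin : volume s ≠ ⊤)
    (hQ : MeasurableSet Q) (hQfin : volume Q ≠ ⊤) (b : ℝ) (hb : 0 ≤ b)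
    (hfb : ∀ x, |f x| ≤ s.indicator (fun _ => b) x) :
    Measurable (fun x => ∫ y, kN n j ε N (x - y) * f y) ∧
    ∫⁻ x in Q, ‖∫ y, kN n j ε N (x - y) * f y‖ₑ ≤
      ENNReal.ofReal (Mc n * (√((volume : Measure _).real Q) *
        (b * √((volume : Measure _).real s)))) := by
  set U : EuclideanSpace ℝ (Fin n) → ℝ := fun x => ∫ y, kN n j ε N (x - y) * f y with hU
  have hkm := measurable_kN n j ε N
  have hUm : Measurable U := by
    have : StronglyMeasurable (fun p : EuclideanSpace ℝ (Fin n) × EuclideanSpace ℝ (Fin n) =>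
        kN n j ε N (p.1 - p.2) * f p.2) := by
      apply Measurable.stronglyMeasurable
      exact (hkm.comp (measurable_fst.sub measurable_snd)).mul (hf.comp measurable_snd)
    exact this.integral_prod_right'.measurable
  refine ⟨hUm, ?_⟩
  set h : EuclideanSpace ℝ (Fin n) → ℝ := Q.indicator (fun x => if 0 ≤ U x then 1 else -1) with hh
  have hhm : Measurable h := by
    apply Measurable.indicator _ hQ
    exact Measurable.ite (measurableSet_le measurable_const hUm) measurable_const measurable_const
  have hhb : ∀ x, |h x| ≤ Q.indicator (fun _ => (1:ℝ)) x := by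
    intro x
    by_cases hx : x ∈ Q
    · simp only [hh, indicator_of_mem hx]
      split_ifs <;> simp
    · simp [hh, indicator_of_notMem hx]
  have hhU : ∀ x, h x * U x = Q.indicator (fun x => |U x|) x := by
    intro x
    by_cases hx : x ∈ Q
    · simp only [hh, indicator_of_mem hx]
      split_ifs with h0
      · rw [abs_of_nonneg h0, one_mul]
      · rw [abs_of_neg (not_le.1 h0)]; ring
    · simp [hh, indicator_of_notMem hx]
  obtain ⟨hf2, hfn⟩ := L2_of_indicator f hf s hs hfin b hb hfb
  obtain ⟨hh2, hhn⟩ := L2_of_indicator h hhm Q hQ hQfin 1 zero_le_one hhb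
  rw [one_mul] at hhn
  have hk := integrable_kN n j ε N hε
  have hhi : Integrable h := by
    have : Integrable (Q.indicator (fun _ => (1:ℝ))) :=
      (integrable_indicator_iff hQ).2 (integrableOn_const hQfin)
    exact this.mono hhm.aestronglyMeasurable (ae_of_all _ fun x => (hhb x).trans (le_abs_self _))
  have hfb' : ∀ x, |f x| ≤ b := fun x => (hfb x).trans (indicator_le_self' (fun _ _ => hb) x)
  have hprod : Integrable (fun p : EuclideanSpace ℝ (Fin n) × EuclideanSpace ℝ (Fin n) =>
      (h p.1 * kN n j ε N p.2) * f (p.1 - p.2)) (volume.prod volume) := by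
    refine (hhi.mul_prod hk).mul_bdd (c := b) ?_ (ae_of_all _ fun p => hfb' _)
    exact (hf.comp (measurable_fst.sub measurable_snd)).aestronglyMeasurable
  have e1 : ∀ x, ∫ z, (h x * kN n j ε N z) * f (x - z) = Q.indicator (fun x => |U x|) x := by
    intro x
    rw [← hhU]
    simp only [hU, mul_assoc]
    rw [integral_const_mul]
    congr 1
    rw [← integral_sub_left_eq_self (fun z => kN n j ε N z * f (x - z)) volume x]
    simp
  have hUi : IntegrableOn (fun x => |U x|) Q := by
    rw [← integrable_indicator_iff hQ]
    have := hprod.integral_prod_left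
    simpa only [e1] using this
  have key := bilin_bound (kN n j ε N) hk (Mc n) (mult_bound n hn j ε N hε hN) f h hf2 hh2
  have e2 : ∫ x in Q, |U x| = ∫ z, kN n j ε N z * ∫ x, h x * f (x - z) := by
    rw [← integral_indicator hQ]
    simp only [← e1]
    rw [integral_integral_swap hprod]
    congr 1
    funext z
    rw [← integral_const_mul]
    congr 1
    funext x
    ring
  rw [← ofReal_integral_norm_eq_lintegral_enorm]
  · apply ENNReal.ofReal_le_ofReal
    simp only [Real.norm_eq_abs]
    rw [e2]
    refine (le_abs_self _).trans (key.trans ?_)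
    gcongr
    exact Mc_nonneg n
  · exact (integrable_norm_iff hUm.aestronglyMeasurable).1 hUi

/-- Cutoff kernel centred at `z`. -/
noncomputable def cK (n : ℕ) (j : Fin n) (s : ℝ) (z y : EuclideanSpace ℝ (Fin n)) : ℝ :=
  {y | s ≤ ‖z - y‖}.indicator (fun y => rieszK n j (z - y)) y

lemma measurableSet_far (n : ℕ) (s : ℝ) (z : EuclideanSpace ℝ (Fin n)) :
    MeasurableSet {y : EuclideanSpace ℝ (Fin n) | s ≤ ‖z - y‖} :=
  measurableSet_le (by fun_prop) (by fun_prop)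

lemma measurable_cK (n : ℕ) (j : Fin n) (s : ℝ) (z : EuclideanSpace ℝ (Fin n)) :
    Measurable (cK n j s z) := by
  have : Measurable (fun y => rieszK n j (z - y)) :=
    (measurable_rieszK n j).comp (by fun_prop)
  exact this.indicator (measurableSet_far n s z)

lemma cK_abs_le (n : ℕ) (j : Fin n) (s : ℝ) (hs : 0 < s) (z y : EuclideanSpace ℝ (Fin n)) :
    |cK n j s z y| ≤ rzc n / s ^ n := by
  have := rzc_pos n
  unfold cK
  by_cases h : y ∈ {y | s ≤ ‖z - y‖}
  · rw [indicator_of_mem h]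
    exact rieszK_abs_le n j _ s hs h
  · rw [indicator_of_notMem h, abs_zero]
    positivity

/-- Lipschitz constant for the kernel. -/
noncomputable def Lc (n : ℕ) : ℝ := rzc n * (1 + (n + 1) * 4 ^ n)

lemma Lc_pos (n : ℕ) : 0 < Lc n := by
  have := rzc_pos n
  unfold Lc
  positivity

lemma integrable_cK_sub (n : ℕ) (hn : 0 < n) (j : Fin n) (s t : ℝ) (hs : 0 < s) (ht : 0 < t)
    (z w : EuclideanSpace ℝ (Fin n)) : Integrable (fun y => cK n j s z y - cK n j t w y) := by
  set ρ : ℝ := 2 * ‖z - w‖ + s + t with hρ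
  have hρ0 : 0 < ρ := by positivity
  have hm : Measurable (fun y => cK n j s z y - cK n j t w y) :=
    (measurable_cK n j s z).sub (measurable_cK n j t w)
  have hfar := measurableSet_far n ρ z
  rw [← integrableOn_univ, ← union_compl_self {y : EuclideanSpace ℝ (Fin n) | ρ ≤ ‖z - y‖}]
  apply IntegrableOn.union
  · have h1 := ((tail_int n hn z ρ hρ0).1).const_mul (Lc n * ‖z - w‖)
    refine h1.mono' hm.aestronglyMeasurable ?_
    filter_upwards [ae_restrict_mem hfar] with y hy
    have hy' : ρ ≤ ‖z - y‖ := hy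
    have hnn := norm_nonneg (z - w)
    have hw : t ≤ ‖w - y‖ := by
      have := norm_sub_norm_le (z - y) (z - w)
      rw [sub_sub_sub_cancel_left] at this
      linarith
    have hd := rieszK_diff n j (z - y) (w - y) (hρ0.trans_le hy')
      (by rw [sub_sub_sub_cancel_right]; linarith)
    rw [sub_sub_sub_cancel_right] at hd
    unfold cK
    rw [indicator_of_mem (show y ∈ {y | s ≤ ‖z - y‖} from by simp; linarith),
      indicator_of_mem (show y ∈ {y | t ≤ ‖w - y‖} from hw), Real.norm_eq_abs]
    refine hd.trans (le_of_eq ?_)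
    unfold Lc
    ring
  · apply Measure.integrableOn_of_bounded (M := rzc n / s ^ n + rzc n / t ^ n)
    · apply ne_of_lt
      refine lt_of_le_of_lt (measure_mono (t := Metric.ball z ρ) ?_) measure_ball_lt_top
      intro y hy
      rw [Metric.mem_ball, dist_comm, dist_eq_norm]
      simpa using hy
    · exact hm.aestronglyMeasurable
    · refine ae_of_all _ fun y => ?_
      rw [Real.norm_eq_abs]
      exact (abs_sub _ _).trans (add_le_add (cK_abs_le n j s hs z y) (cK_abs_le n j t ht w y))

/-- Constant part of the local decomposition. -/
noncomputable def Gk {n : ℕ} (j : Fin n) (φ : EuclideanSpace ℝ (Fin n) → ℝ)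
    (c : EuclideanSpace ℝ (Fin n)) (D : ℝ) (y : EuclideanSpace ℝ (Fin n)) : ℝ :=
  (cK n j (2 * D) c y - cK n j 1 0 y) * φ y

/-- Volume of the unit ball. -/
noncomputable def Vb (n : ℕ) : ℝ :=
  (volume : Measure (EuclideanSpace ℝ (Fin n))).real (Metric.ball 0 1)

lemma decomp (n : ℕ) (hn : 0 < n) (j : Fin n) (φ : EuclideanSpace ℝ (Fin n) → ℝ) (B : ℝ)
    (hφ : Measurable φ) (hB : ∀ x, |φ x| ≤ B) (c x : EuclideanSpace ℝ (Fin n)) (D ε : ℝ)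
    (hD : 0 < D) (hε : 0 < ε) (hx : ‖x - c‖ ≤ D) :
    |rieszTruncLinf j φ x ε - ∫ y in {y | ε ≤ ‖x - y‖}, Gk j φ c D y| ≤
      |∫ y, kN n j ε (4 * D) (x - y) * ({y | ‖c - y‖ < 2 * D}.indicator φ) y|
        + Lc n * (n * Vb n) * B / 2 := by
  have hB0 : 0 ≤ B := (abs_nonneg _).trans (hB 0)
  have hL := Lc_pos n
  set S : Set (EuclideanSpace ℝ (Fin n)) := {y | ε ≤ ‖x - y‖} with hS
  have hSm : MeasurableSet S := measurableSet_far n ε x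
  have hφb : ∀ᵐ y : EuclideanSpace ℝ (Fin n), ‖φ y‖ ≤ B := ae_of_all _ hB
  set f := {y | ‖c - y‖ < 2 * D}.indicator φ with hf
  have hballm : MeasurableSet {y : EuclideanSpace ℝ (Fin n) | ‖c - y‖ < 2 * D} :=
    measurableSet_lt (by fun_prop) (by fun_prop)
  have hfm : Measurable f := hφ.indicator hballm
  have hfb : ∀ y, |f y| ≤ B := by
    intro y
    by_cases hy : y ∈ {y : EuclideanSpace ℝ (Fin n) | ‖c - y‖ < 2 * D}
    · simp only [hf, indicator_of_mem hy]; exact hB y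
    · simp only [hf, indicator_of_notMem hy, abs_zero]; exact hB0
  have hFm := measurableSet_far n (2 * D) c
  set h2 : EuclideanSpace ℝ (Fin n) → ℝ := {y | 2 * D ≤ ‖c - y‖}.indicator
    (fun y => (rieszK n j (x - y) - rieszK n j (c - y)) * φ y) with hh2
  set b : EuclideanSpace ℝ (Fin n) → ℝ := {y | 2 * D ≤ ‖c - y‖}.indicator
    (fun y => (Lc n * D * B) * (1 / ‖c - y‖ ^ (n + 1))) with hb
  obtain ⟨ti, tv⟩ := tail_int n hn c (2 * D) (by positivity)
  have hbi : Integrable b := (integrable_indicator_iff hFm).2 (ti.const_mul _)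
  have hbv : ∫ y, b y = Lc n * (n * Vb n) * B / 2 := by
    rw [hb, integral_indicator hFm, integral_const_mul, tv]
    unfold Vb
    field_simp
  have hb0 : ∀ y, 0 ≤ b y := by
    intro y
    apply indicator_nonneg
    intro y _
    positivity
  have hh2b : ∀ y, ‖h2 y‖ ≤ b y := by
    intro y
    by_cases hy : y ∈ {y : EuclideanSpace ℝ (Fin n) | 2 * D ≤ ‖c - y‖}
    · simp only [hh2, hb, indicator_of_mem hy]
      have hy' : 2 * D ≤ ‖c - y‖ := hy
      have hd := rieszK_diff n j (c - y) (x - y) (by linarith)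
        (by rw [sub_sub_sub_cancel_right, norm_sub_rev]; linarith)
      rw [sub_sub_sub_cancel_right, norm_sub_rev, abs_sub_comm] at hd
      rw [norm_mul, Real.norm_eq_abs, Real.norm_eq_abs]
      have hpos : 0 < ‖c - y‖ := by linarith
      calc |rieszK n j (x - y) - rieszK n j (c - y)| * |φ y|
          ≤ (Lc n * (D / ‖c - y‖ ^ (n + 1))) * B := by
            gcongr
            · refine hd.trans ?_
              unfold Lc at *
              gcongr
            · exact hB y
        _ = (Lc n * D * B) * (1 / ‖c - y‖ ^ (n + 1)) := by ring
    · simp only [hh2, hb, indicator_of_notMem hy, norm_zero, le_refl]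
  have hKm := measurable_rieszK n j
  have hh2m : Measurable h2 := by
    apply Measurable.indicator _ hFm
    exact ((hKm.comp (by fun_prop)).sub (hKm.comp (by fun_prop))).mul hφ
  have hh2i : Integrable h2 := hbi.mono' hh2m.aestronglyMeasurable (ae_of_all _ hh2b)
  have hki : Integrable (fun y => kN n j ε (4 * D) (x - y) * f y) :=
    ((integrable_kN n j ε (4 * D) hε).comp_sub_left x).mul_bdd (c := B) hfm.aestronglyMeasurable
      (ae_of_all _ hfb)
  have i1 : Integrable (fun y => (cK n j ε x y - cK n j 1 0 y) * φ y) :=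
    (integrable_cK_sub n hn j ε 1 hε one_pos x 0).mul_bdd (c := B) hφ.aestronglyMeasurable hφb
  have i2 : Integrable (Gk j φ c D) :=
    (integrable_cK_sub n hn j (2 * D) 1 (by positivity) one_pos c 0).mul_bdd (c := B)
      hφ.aestronglyMeasurable hφb
  have e1 : rieszTruncLinf j φ x ε = ∫ y in S, (cK n j ε x y - cK n j 1 0 y) * φ y := by
    unfold rieszTruncLinf
    simp only [dist_eq_norm]
    refine setIntegral_congr_fun hSm fun y hy => ?_
    have : cK n j ε x y = rieszK n j (x - y) := indicator_of_mem hy _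
    simp only [this]
    congr 2
    unfold cK
    simp [indicator]
  have e2 : rieszTruncLinf j φ x ε - ∫ y in S, Gk j φ c D y
      = (∫ y, kN n j ε (4 * D) (x - y) * f y) + ∫ y in S, h2 y := by
    rw [e1, ← integral_sub i1.integrableOn i2.integrableOn]
    have e3 : ∫ y, kN n j ε (4 * D) (x - y) * f y = ∫ y in S, kN n j ε (4 * D) (x - y) * f y := by
      rw [← integral_indicator hSm]
      congr 1
      funext y
      by_cases hy : y ∈ S
      · rw [indicator_of_mem hy]
      · rw [indicator_of_notMem hy]
        unfold kN
        rw [indicator_of_notMem (fun h => hy h.1), zero_mul]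
    rw [e3, ← integral_add hki.integrableOn hh2i.integrableOn]
    refine setIntegral_congr_fun hSm fun y hy => ?_
    have hy0 : ε ≤ ‖x - y‖ := hy
    have h1 : cK n j ε x y = rieszK n j (x - y) := indicator_of_mem hy _
    simp only [Gk, h1]
    by_cases hc : 2 * D ≤ ‖c - y‖
    · have hc' : y ∈ {y : EuclideanSpace ℝ (Fin n) | 2 * D ≤ ‖c - y‖} := hc
      have hf0 : f y = 0 := indicator_of_notMem (by simpa using hc) _
      have h2' : h2 y = (rieszK n j (x - y) - rieszK n j (c - y)) * φ y := indicator_of_mem hc' _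
      have h3 : cK n j (2 * D) c y = rieszK n j (c - y) := indicator_of_mem hc' _
      rw [hf0, h2', h3]
      ring
    · have hc' : y ∉ {y : EuclideanSpace ℝ (Fin n) | 2 * D ≤ ‖c - y‖} := hc
      have hf0 : f y = φ y := indicator_of_mem (by simpa using hc) _
      have h2' : h2 y = 0 := indicator_of_notMem hc' _
      have h3 : cK n j (2 * D) c y = 0 := indicator_of_notMem hc' _
      have h4 : kN n j ε (4 * D) (x - y) = rieszK n j (x - y) := by
        have hlt : ‖x - y‖ < 4 * D := by
          have : ‖x - y‖ ≤ ‖x - c‖ + ‖c - y‖ := norm_sub_le_norm_sub_add_norm_sub x c y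
          push Not at hc
          linarith
        exact indicator_of_mem (show (x - y) ∈ {z : EuclideanSpace ℝ (Fin n) |
          ε ≤ ‖z‖ ∧ ‖z‖ < 4 * D} from ⟨hy0, hlt⟩) _
      rw [hf0, h2', h3, h4]
      ring
  rw [e2]
  refine (abs_add_le _ _).trans ?_
  gcongr
  rw [← hbv, ← Real.norm_eq_abs]
  refine (norm_integral_le_of_norm_le hbi.integrableOn (ae_of_all _ hh2b)).trans ?_
  exact setIntegral_le_integral hbi (ae_of_all _ hb0)

lemma Gk_tendsto (n : ℕ) (hn : 0 < n) (j : Fin n) (φ : EuclideanSpace ℝ (Fin n) → ℝ) (B : ℝ)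
    (hφ : Measurable φ) (hB : ∀ x, |φ x| ≤ B) (c x : EuclideanSpace ℝ (Fin n)) (D : ℝ)
    (hD : 0 < D) (ε : ℕ → ℝ) (hε : Tendsto ε atTop (nhds 0)) :
    Tendsto (fun m => ∫ y in {y | ε m ≤ ‖x - y‖}, Gk j φ c D y) atTop
      (nhds (∫ y, Gk j φ c D y)) := by
  have : Nonempty (Fin n) := ⟨⟨0, hn⟩⟩
  have i2 : Integrable (Gk j φ c D) :=
    (integrable_cK_sub n hn j (2 * D) 1 (by positivity) one_pos c 0).mul_bdd (c := B)
      hφ.aestronglyMeasurable (ae_of_all _ hB)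
  simp only [← integral_indicator (measurableSet_far n _ x)]
  apply tendsto_integral_of_dominated_convergence (fun y => ‖Gk j φ c D y‖)
  · intro m
    exact (i2.indicator (measurableSet_far n _ x)).aestronglyMeasurable
  · exact i2.norm
  · intro m
    exact ae_of_all _ fun y => norm_indicator_le_norm_self _ _
  · have hne : ∀ᵐ y : EuclideanSpace ℝ (Fin n), y ≠ x := by
      simp [ae_iff]
    filter_upwards [hne] with y hy
    apply tendsto_const_nhds.congr'
    have hpos : 0 < ‖x - y‖ := norm_pos_iff.2 (sub_ne_zero.2 hy.symm)
    filter_upwards [hε.eventually (gt_mem_nhds hpos)] with m hm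
    exact (indicator_of_mem (show y ∈ {y | ε m ≤ ‖x - y‖} from hm.le) _).symm

lemma measurable_trunc (n : ℕ) (j : Fin n) (φ : EuclideanSpace ℝ (Fin n) → ℝ)
    (hφ : Measurable φ) (ε : ℝ) : Measurable (fun x => rieszTruncLinf j φ x ε) := by
  have hm : MeasurableSet {p : EuclideanSpace ℝ (Fin n) × EuclideanSpace ℝ (Fin n) |
      ε ≤ dist p.1 p.2} := measurableSet_le measurable_const (by fun_prop)
  have hK := measurable_rieszK n j
  have h1 : Measurable (fun p : EuclideanSpace ℝ (Fin n) × EuclideanSpace ℝ (Fin n) =>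
      {p : EuclideanSpace ℝ (Fin n) × EuclideanSpace ℝ (Fin n) | ε ≤ dist p.1 p.2}.indicator
      (fun p => (rieszK n j (p.1 - p.2) - (if 1 ≤ ‖p.2‖ then rieszK n j (-p.2) else 0)) * φ p.2) p) := by
    apply Measurable.indicator _ hm
    refine Measurable.mul (Measurable.sub (hK.comp (by fun_prop)) ?_) (hφ.comp measurable_snd)
    exact Measurable.ite (measurableSet_le measurable_const (by fun_prop)) (hK.comp (by fun_prop))
      measurable_const
  have h2 := h1.stronglyMeasurable.integral_prod_right' (ν := volume)
  convert h2.measurable using 2 with x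
  unfold rieszTruncLinf
  rw [← integral_indicator (measurableSet_le measurable_const (by fun_prop))]
  rfl


lemma isOpen_cube {n : ℕ} (c : EuclideanSpace ℝ (Fin n)) (l : ℝ) : IsOpen (cube c l) := by
  have : cube c l = ⋂ i, {x : EuclideanSpace ℝ (Fin n) | x i ∈ Set.Ioo (c i) (c i + l)} := by
    ext x; simp [cube]
  rw [this]
  refine isOpen_iInter_of_finite fun i => ?_
  exact isOpen_Ioo.preimage (by fun_prop)

lemma volume_cube {n : ℕ} (c : EuclideanSpace ℝ (Fin n)) (l : ℝ) (hl : 0 < l) :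
    volume (cube c l) = ENNReal.ofReal (l ^ n) := by
  have h := (EuclideanSpace.volume_preserving_symm_measurableEquiv_toLp (Fin n)).symm.measure_preimage_equiv
    (cube c l)
  rw [← h]
  have h2 : (MeasurableEquiv.toLp 2 (Fin n → ℝ)) ⁻¹' (cube c l)
      = Set.pi univ fun i => Set.Ioo (c i) (c i + l) := by
    ext x; simp [cube, Set.mem_pi]
  have h3 : (MeasurableEquiv.toLp 2 (Fin n → ℝ)).symm.symm ⁻¹' (cube c l)
      = Set.pi univ fun i => Set.Ioo (c i) (c i + l) := h2
  rw [h3, Real.volume_pi_Ioo]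
  simp [ENNReal.ofReal_pow hl.le]

lemma cube_norm {n : ℕ} (c x : EuclideanSpace ℝ (Fin n)) (l : ℝ) (hx : x ∈ cube c l)
    (hn : 0 < n) : ‖x - c‖ ≤ n * l := by
  have hl : 0 ≤ l := by
    have := hx ⟨0, hn⟩
    linarith [this.1, this.2]
  rw [EuclideanSpace.norm_eq]
  apply Real.sqrt_le_iff.2
  refine ⟨by positivity, ?_⟩
  have h1 : ∑ i, ‖(x - c) i‖ ^ 2 ≤ ∑ _i : Fin n, l ^ 2 := by
    refine Finset.sum_le_sum fun i _ => ?_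
    have := hx i
    gcongr
    rw [Real.norm_eq_abs, abs_le]
    simp only [PiLp.sub_apply]
    constructor <;> linarith [this.1, this.2]
  refine h1.trans ?_
  simp only [Finset.sum_const, Finset.card_univ, Fintype.card_fin, nsmul_eq_mul]
  have : (1 : ℝ) ≤ n := by exact_mod_cast hn
  rw [mul_pow]
  gcongr
  nlinarith

/-- The constant in the mean oscillation estimate. -/
noncomputable def C1 (n : ℕ) : ℝ :=
  Mc n * √((2 * n) ^ n * Vb n) + Lc n * (n * Vb n) / 2

lemma C1_nonneg (n : ℕ) : 0 ≤ C1 n := by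
  have h1 := Mc_nonneg n
  have h2 := (Lc_pos n).le
  have h3 : 0 ≤ Vb n := by unfold Vb; positivity
  unfold C1
  positivity

lemma aesm_g (n : ℕ) (j : Fin n) (φ g : EuclideanSpace ℝ (Fin n) → ℝ)
    (hφ : Measurable φ) (hg : IsRieszTransformLinf j φ g) : AEMeasurable g := by
  have ht : Tendsto (fun m : ℕ => 1 / ((m : ℝ) + 1)) atTop (nhdsWithin 0 (Set.Ioi 0)) := by
    refine tendsto_nhdsWithin_iff.2 ⟨tendsto_one_div_add_atTop_nhds_zero_nat, ?_⟩
    exact Eventually.of_forall fun m => by simp only [mem_Ioi]; positivity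
  refine aemeasurable_of_tendsto_metrizable_ae (u := atTop)
    (f := fun (m : ℕ) x => rieszTruncLinf j φ x (1 / ((m : ℝ) + 1)))
    (fun m => (measurable_trunc n j φ hφ _).aemeasurable) ?_
  filter_upwards [hg] with x hx
  exact hx.comp ht

lemma local_bound (n : ℕ) (hn : 0 < n) (j : Fin n) (φ g : EuclideanSpace ℝ (Fin n) → ℝ) (B : ℝ)
    (hφ : Measurable φ) (hB : ∀ x, |φ x| ≤ B) (hg : IsRieszTransformLinf j φ g)
    (c : EuclideanSpace ℝ (Fin n)) (l : ℝ) (hl : 0 < l) :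
    ∃ a : ℝ, ∫⁻ x in cube c l, ‖g x - a‖ₑ ≤ ENNReal.ofReal (C1 n * B * l ^ n) := by
  have : Nonempty (Fin n) := ⟨⟨0, hn⟩⟩
  have hB0 : 0 ≤ B := (abs_nonneg _).trans (hB 0)
  have hn' : (0 : ℝ) < n := by exact_mod_cast hn
  set D : ℝ := n * l with hDdef
  have hD : 0 < D := by positivity
  have hV : 0 ≤ Vb n := by unfold Vb; positivity
  have hL := (Lc_pos n).le
  have hM := Mc_nonneg n
  set K : ℝ := Lc n * (n * Vb n) * B / 2 with hK
  have hK0 : 0 ≤ K := by positivity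
  set a : ℝ := ∫ y, Gk j φ c D y with ha
  set ε : ℕ → ℝ := fun m => D * (1 / ((m : ℝ) + 1)) with hεdef
  have hε0 : ∀ m, 0 < ε m := fun m => by simp only [hεdef]; positivity
  have hεD : ∀ m, ε m ≤ 4 * D := fun m => by
    have h1 : 1 / ((m : ℝ) + 1) ≤ 1 := by
      rw [div_le_one (by positivity)]
      linarith [(Nat.cast_nonneg m : (0 : ℝ) ≤ m)]
    have : ε m ≤ D * 1 := mul_le_mul_of_nonneg_left h1 hD.le
    linarith
  have hεt : Tendsto ε atTop (nhds 0) := by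
    have := (tendsto_one_div_add_atTop_nhds_zero_nat (𝕜 := ℝ)).const_mul D
    rw [mul_zero] at this
    exact this
  have hεt' : Tendsto ε atTop (nhdsWithin 0 (Set.Ioi 0)) :=
    tendsto_nhdsWithin_iff.2 ⟨hεt, Eventually.of_forall hε0⟩
  set s : Set (EuclideanSpace ℝ (Fin n)) := {y | ‖c - y‖ < 2 * D} with hs
  have hsball : s = Metric.ball c (2 * D) := by
    ext y; simp [hs, dist_eq_norm, norm_sub_rev]
  have hsm : MeasurableSet s := by rw [hsball]; exact measurableSet_ball
  have hsvol : volume.real s = (2 * D) ^ n * Vb n := by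
    rw [hsball, Measure.real, Measure.addHaar_ball _ _ (by positivity), ENNReal.toReal_mul,
      ENNReal.toReal_ofReal (by positivity)]
    simp [Vb, Measure.real]
  have hsfin : volume s ≠ ⊤ := by rw [hsball]; exact measure_ball_lt_top.ne
  set f := s.indicator φ with hf
  have hfm : Measurable f := hφ.indicator hsm
  have hfb : ∀ x, |f x| ≤ s.indicator (fun _ => B) x := fun x => by
    by_cases hx : x ∈ s
    · simp [hf, hx, hB x]
    · simp [hf, hx]
  have hQm : MeasurableSet (cube c l) := (isOpen_cube c l).measurableSet
  have hQv := volume_cube c l hl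
  have hQfin : volume (cube c l) ≠ ⊤ := by rw [hQv]; exact ENNReal.ofReal_ne_top
  have hQr : volume.real (cube c l) = l ^ n := by
    rw [Measure.real, hQv, ENNReal.toReal_ofReal (by positivity)]
  set U : ℕ → EuclideanSpace ℝ (Fin n) → ℝ :=
    fun m x => ∫ y, kN n j (ε m) (4 * D) (x - y) * f y with hU
  have hUb : ∀ m, Measurable (U m) ∧ ∫⁻ x in cube c l, ‖U m x‖ₑ ≤
      ENNReal.ofReal (Mc n * (√(volume.real (cube c l)) * (B * √(volume.real s)))) := fun m =>
    U_bound n hn j (ε m) (4 * D) (hε0 m) (hεD m) f hfm s (cube c l) hsm hsfin hQm hQfin B hB0 hfb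
  have hcalc : Mc n * (√(volume.real (cube c l)) * (B * √(volume.real s))) + K * l ^ n
      = C1 n * B * l ^ n := by
    have e : (2 * D) ^ n * Vb n = l ^ n * ((2 * n) ^ n * Vb n) := by
      rw [hDdef, ← mul_assoc, mul_pow]; ring
    rw [hQr, hsvol, e, Real.sqrt_mul (by positivity), C1, hK]
    have h := Real.mul_self_sqrt (show (0 : ℝ) ≤ l ^ n by positivity)
    linear_combination (Mc n * B * √((2 * n) ^ n * Vb n)) * h
  refine ⟨a, ?_⟩
  calc ∫⁻ x in cube c l, ‖g x - a‖ₑ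
      ≤ ∫⁻ x in cube c l, liminf (fun m => ‖U m x‖ₑ + ENNReal.ofReal K) atTop := by
        refine lintegral_mono_ae ?_
        filter_upwards [ae_restrict_of_ae hg, ae_restrict_mem hQm] with x hx hxQ
        have t1 : Tendsto (fun m => rieszTruncLinf j φ x (ε m)) atTop (nhds (g x)) :=
          hx.comp hεt'
        have t2 := (t1.sub (Gk_tendsto n hn j φ B hφ hB c x D hD ε hεt)).enorm
        rw [← t2.liminf_eq]
        refine liminf_le_liminf (Eventually.of_forall fun m => ?_)
        have hd := decomp n hn j φ B hφ hB c x D (ε m) hD (hε0 m) (cube_norm c x l hxQ hn)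
        rw [← ofReal_norm, ← ofReal_norm,
          ← ENNReal.ofReal_add (norm_nonneg _) hK0]
        exact ENNReal.ofReal_le_ofReal hd
    _ ≤ liminf (fun m => ∫⁻ x in cube c l, (‖U m x‖ₑ + ENNReal.ofReal K)) atTop :=
        lintegral_liminf_le fun m => (hUb m).1.enorm.add_const _
    _ ≤ liminf (fun _ : ℕ => ENNReal.ofReal (C1 n * B * l ^ n)) atTop := by
        refine liminf_le_liminf (Eventually.of_forall fun m => ?_)
        rw [lintegral_add_right _ measurable_const, lintegral_const, Measure.restrict_apply_univ,
          hQv, ← ENNReal.ofReal_mul hK0, ← hcalc, ENNReal.ofReal_add (by positivity) (by positivity)]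
        gcongr
        exact (hUb m).2
    _ = _ := by simp

lemma osc_of_local (n : ℕ) (g : EuclideanSpace ℝ (Fin n) → ℝ) (hg : AEMeasurable g)
    (c : EuclideanSpace ℝ (Fin n)) (l : ℝ) (hl : 0 < l) (a A : ℝ) (hA : 0 ≤ A)
    (h : ∫⁻ x in cube c l, ‖g x - a‖ₑ ≤ ENNReal.ofReal (A * l ^ n)) :
    IntegrableOn g (cube c l) ∧ cubeOsc g c l ≤ 2 * A := by
  have hQv := volume_cube c l hl
  have hQfin : volume (cube c l) ≠ ⊤ := by rw [hQv]; exact ENNReal.ofReal_ne_top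
  have hln : 0 < l ^ n := by positivity
  have hQr : volume.real (cube c l) = l ^ n := by
    rw [Measure.real, hQv, ENNReal.toReal_ofReal hln.le]
  have i1 : IntegrableOn (fun x => g x - a) (cube c l) := by
    refine ⟨((hg.sub_const a).restrict).aestronglyMeasurable, ?_⟩
    exact h.trans_lt ENNReal.ofReal_lt_top
  have ic : ∀ b : ℝ, IntegrableOn (fun _ : EuclideanSpace ℝ (Fin n) => b) (cube c l) :=
    fun b => integrableOn_const hQfin
  have i2 : IntegrableOn g (cube c l) := by
    have := i1.add (ic a)
    refine this.congr (ae_of_all _ fun x => ?_)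
    simp
  refine ⟨i2, ?_⟩
  have b1 : ∫ x in cube c l, |g x - a| ≤ A * l ^ n := by
    have : ∫ x in cube c l, |g x - a| = (∫⁻ x in cube c l, ‖g x - a‖ₑ).toReal := by
      rw [← integral_norm_eq_lintegral_enorm i1.aestronglyMeasurable]
      rfl
    rw [this]
    refine ENNReal.toReal_le_of_le_ofReal (by positivity) h
  have b2 : |a - cubeAvg g c l| ≤ A := by
    have e : a - cubeAvg g c l = -((∫ x in cube c l, (g x - a)) / l ^ n) := by
      rw [integral_sub i2 (ic a), setIntegral_const, hQr, cubeAvg, smul_eq_mul]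
      field_simp
      ring
    rw [e, abs_neg, abs_div, abs_of_pos hln, div_le_iff₀ hln]
    exact abs_integral_le_integral_abs.trans b1
  unfold cubeOsc
  rw [div_le_iff₀ hln]
  calc ∫ x in cube c l, |g x - cubeAvg g c l|
      ≤ ∫ x in cube c l, (|g x - a| + A) := by
        refine integral_mono (i2.sub (ic _)).abs (i1.abs.add (ic A)) fun x => ?_
        have : g x - cubeAvg g c l = (g x - a) + (a - cubeAvg g c l) := by ring
        simp only
        rw [this]
        exact (abs_add_le _ _).trans (by gcongr)
    _ = (∫ x in cube c l, |g x - a|) + A * l ^ n := by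
        rw [integral_add i1.abs (ic A), setIntegral_const, hQr, smul_eq_mul, mul_comm A]
    _ ≤ 2 * A * l ^ n := by linarith
/-- **Riesz transforms are bounded from `L^∞(ℝⁿ)` to `BMO(ℝⁿ)`:** there is a constant `C(n)`
such that `‖R_j(φ)‖_* ≤ C(n) ‖φ‖_∞` for every `φ ∈ L^∞(ℝⁿ)`. -/
theorem riesz_linf_to_bmo (n : ℕ) :
    ∃ C > (0 : ℝ), ∀ (j : Fin n) (φ g : EuclideanSpace ℝ (Fin n) → ℝ) (B : ℝ),
      Measurable φ → (∀ x, |φ x| ≤ B) → IsRieszTransformLinf j φ g →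
      IsBMO g ∧ ∀ c l, 0 < l → cubeOsc g c l ≤ C * B := by
  rcases Nat.eq_zero_or_pos n with rfl | hn
  · exact ⟨1, one_pos, fun j => j.elim0⟩
  refine ⟨2 * C1 n + 1, by linarith [C1_nonneg n], fun j φ g B hφ hB hg => ?_⟩
  have hB0 : 0 ≤ B := (abs_nonneg _).trans (hB 0)
  have hgm := aesm_g n j φ g hφ hg
  have key : ∀ c l, 0 < l → IntegrableOn g (cube c l) ∧ cubeOsc g c l ≤ 2 * (C1 n * B) := by
    intro c l hl
    obtain ⟨a, ha⟩ := local_bound n hn j φ g B hφ hB hg c l hl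
    exact osc_of_local n g hgm c l hl a _ (mul_nonneg (C1_nonneg n) hB0) ha
  have key2 : ∀ c l, 0 < l → cubeOsc g c l ≤ (2 * C1 n + 1) * B := fun c l hl =>
    (key c l hl).2.trans (by nlinarith)
  refine ⟨⟨fun x => ?_, _, key2⟩, key2⟩
  set c : EuclideanSpace ℝ (Fin n) := WithLp.toLp 2 (fun i => x i - 1) with hc
  refine ⟨cube c 2, (isOpen_cube c 2).mem_nhds fun i => ?_, (key c 2 two_pos).1⟩
  simp only [hc, mem_Ioo]
  constructor <;> linarith
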